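/- Let G be the group presented by the generating set S and relation set R of Theorem 2.14 (the presentation of the virtual Thompson group VF) as described in the context. Then G is finitely presented: there exist a finite set T and a finite set of relators R′ contained in the free group on T such that G is isomorphic to the presented group ⟨T | R′⟩. -/

import Mathlib

/-- The alphabet Σ = {x, v}. -/
inductive Letter : Type
  | x | v
deriving DecidableEq

/-- Words on Σ (possibly empty). -/
abbrev Word := List Letter

/-- A target word t ∈ {xx, xv, vx, vv}, encoded as the pair of its two letters. -/
abbrev Tgt := Letter × Letter

/-- The word (of length two) corresponding to a target. -/
def tw (t : Tgt) : Word := [t.1, t.2]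

/-- Index for the three generators of family (i): X_{v→vv}, X_{v→vx}, X_{v→xv}. -/
inductive G1 : Type
  | vv   -- X_{v→vv}
  | vx   -- X_{v→vx}
  | xv   -- X_{v→xv}
deriving DecidableEq

/-- Index for the four kinds of generators of family (iii):
X_{x→vv,u}, X_{x→vx,u}, X_{v→xx,u}, X_{v→xv,u}. -/
inductive G3 : Type
  | xvv  -- X_{x→vv,u}
  | xvx  -- X_{x→vx,u}
  | vxx  -- X_{v→xx,u}
  | vxv  -- X_{v→xv,u}
deriving DecidableEq

/-- The generating set S of the presentation of the virtual Thompson group VF. -/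
inductive Gen : Type
  /-- family (i): X_{v→vv}, X_{v→vx}, X_{v→xv} -/
  | fam1 : G1 → Gen
  /-- family (ii): X_{a, s→t, u} with a ∈ {x,v}, s ∈ {x,v}, t ∈ {xx,xv,vx,vv}, u any word -/
  | fam2 : Letter → Letter → Tgt → Word → Gen
  /-- family (iii): X_{c, u} with c one of x→vv, x→vx, v→xx, v→xv and u a nonempty word -/
  | fam3 : G3 → {u : Word // u ≠ []} → Gen

/-- The corresponding generator of the free group on S. -/
def X (g : Gen) : FreeGroup Gen := FreeGroup.of g

open Letter in
/-- The relators of the presentation of VF (each relation A·B = C·D becomes the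
relator A·B·(C·D)⁻¹). -/
inductive VFRel : FreeGroup Gen → Prop
  /-- (R1) and (R2): for a ∈ {x, v},
  X_{a,s₁→t₁, p s₂ q} X_{a,s₂→t₂, q} = X_{a,s₂→t₂, q} X_{a,s₁→t₁, p t₂ q}. -/
  | r12 (a s₁ s₂ : Letter) (t₁ t₂ : Tgt) (p q : Word) :
      VFRel (X (.fam2 a s₁ t₁ (p ++ [s₂] ++ q)) * X (.fam2 a s₂ t₂ q) *
        (X (.fam2 a s₂ t₂ q) * X (.fam2 a s₁ t₁ (p ++ tw t₂ ++ q)))⁻¹)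
  /-- (R3): X_{x,s→t,q} X_{x→vv, p t q} = X_{x→vv, p s q} X_{v,s→t,q}. -/
  | r3 (s : Letter) (t : Tgt) (p q : Word) :
      VFRel (X (.fam2 x s t q) * X (.fam3 .xvv ⟨p ++ tw t ++ q, by simp [tw]⟩) *
        (X (.fam3 .xvv ⟨p ++ [s] ++ q, by simp⟩) * X (.fam2 v s t q))⁻¹)
  /-- (R4): X_{x,s→t,q} X_{x→vx, p t q} = X_{x→vx, p s q} X_{v,s→t,q}. -/
  | r4 (s : Letter) (t : Tgt) (p q : Word) :
      VFRel (X (.fam2 x s t q) * X (.fam3 .xvx ⟨p ++ tw t ++ q, by simp [tw]⟩) *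
        (X (.fam3 .xvx ⟨p ++ [s] ++ q, by simp⟩) * X (.fam2 v s t q))⁻¹)
  /-- (R5): X_{v,s→t,q} X_{v→xx, p t q} = X_{v→xx, p s q} X_{x,s→t,q}. -/
  | r5 (s : Letter) (t : Tgt) (p q : Word) :
      VFRel (X (.fam2 v s t q) * X (.fam3 .vxx ⟨p ++ tw t ++ q, by simp [tw]⟩) *
        (X (.fam3 .vxx ⟨p ++ [s] ++ q, by simp⟩) * X (.fam2 x s t q))⁻¹)
  /-- (R6): X_{v,s→t,q} X_{v→xv, p t q} = X_{v→xv, p s q} X_{x,s→t,q}. -/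
  | r6 (s : Letter) (t : Tgt) (p q : Word) :
      VFRel (X (.fam2 v s t q) * X (.fam3 .vxv ⟨p ++ tw t ++ q, by simp [tw]⟩) *
        (X (.fam3 .vxv ⟨p ++ [s] ++ q, by simp⟩) * X (.fam2 x s t q))⁻¹)

/-- The set of relators. -/
def VFrels : Set (FreeGroup Gen) := {g | VFRel g}

/-- The virtual Thompson group VF, as the presented group ⟨S | R⟩. -/
abbrev VF := PresentedGroup VFrels

/-!
A generator indexed by a long word is redundant: the relation with `s = x`, empty `q` and `|p| ≥ 2`
expresses the generator at `p ++ [c, d]` through the one at the shorter word `p ++ [x]`, so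
generators at words of length at most three suffice, and eliminating the others uses up these
relations. Every other relation is the last face of a square of rewritings `s → t` and `x → cd`
performed at disjoint places of a word. If `q` ends in `cd`, contracting this end to `x` reduces the
relation to one for a shorter `q`; if `q` has at most one letter and `p` ends in `cd`, contracting
that end reduces it to relations with smaller `2|p| + |q|`, the weight of `p` making up for the case
`x → cd` of the square, where `s` or `t` is moved to the right of the rewritten letter. In both
cases the generators labelling the sides of the square satisfy one of the relations with
`|p|, |q| ≤ 1` or with `s = x` and empty `q`, so that by induction only these are needed.
-/

theorem exists_eq_append_pair {α : Type*} {l : List α} (hl : 2 ≤ l.length) :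
    ∃ l' c d, l = l' ++ [c, d] := by
  obtain ⟨c, d, h⟩ :=
    List.length_eq_two.1 (show (l.drop (l.length - 2)).length = 2 by rw [List.length_drop]; omega)
  exact ⟨_, c, d, by rw [← h, List.take_append_drop]⟩

section Rewriting

variable {Λ H Y : Type*} [Group H] [MulAction H Y]

theorem smul_eq_of_square {u u' v v' : H} {P Q S T : Y} (comm : v * u = u' * v')
    (hPQ : u • P = Q) (hQT : v • Q = T) (hST : u' • S = T) : v' • P = S :=
  smul_left_cancel u' <| by rw [smul_smul, ← comm, mul_smul, hPQ, hQT, hST]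

/-- The relation attached to the rewriting `s → t` inside the word `p s q`: the group element
`a s t q`, which depends only on the part of the word to the right of `s`, carries the value of `Φ`
after the rewriting to the value before it. -/
def SplitRel (a : Λ → Λ × Λ → List Λ → H) (Φ : List Λ → Y) (p : List Λ) (s : Λ) (t : Λ × Λ)
    (q : List Λ) : Prop :=
  a s t q • Φ (p ++ [t.1, t.2] ++ q) = Φ (p ++ [s] ++ q)

/-- The positions whose relations generate all others: those with at most one letter on either
side, and those of a fixed letter `z` at the end of a word. -/
def IsElementary (z : Λ) (p : List Λ) (s : Λ) (q : List Λ) : Prop :=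
  p.length ≤ 1 ∧ q.length ≤ 1 ∨ s = z ∧ q = []

variable {z : Λ} {a : Λ → Λ × Λ → List Λ → H} {Φ : List Λ → Y}

theorem SplitRel.append_pair {p q : List Λ} {s c d : Λ} {t : Λ × Λ}
    (comm : SemiconjBy (a z (c, d) []) (a s t (q ++ [c, d])) (a s t (q ++ [z])))
    (hz : ∀ p, SplitRel a Φ p z (c, d) []) (h : SplitRel a Φ p s t (q ++ [z])) :
    SplitRel a Φ p s t (q ++ [c, d]) := by
  have hPQ := hz (p ++ [t.1, t.2] ++ q)
  have hST := hz (p ++ [s] ++ q)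
  simp only [SplitRel, List.append_assoc, List.append_nil] at hPQ hST h ⊢
  exact smul_eq_of_square comm.eq.symm hPQ h hST

theorem SplitRel.prepend_pair {p q : List Λ} {s c d : Λ} {t : Λ × Λ}
    (comm : SemiconjBy (a s t q) (a z (c, d) ([t.1, t.2] ++ q)) (a z (c, d) ([s] ++ q)))
    (ht : SplitRel a Φ p z (c, d) ([t.1, t.2] ++ q)) (hs : SplitRel a Φ p z (c, d) ([s] ++ q))
    (h : SplitRel a Φ (p ++ [z]) s t q) : SplitRel a Φ (p ++ [c, d]) s t q := by
  simp only [SplitRel, List.append_assoc] at ht hs h ⊢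
  exact smul_eq_of_square comm.eq ht h hs

theorem splitRel_of_isElementary
    (comm : ∀ s' t' p s t q, IsElementary z p s q →
      SemiconjBy (a s t q) (a s' t' (p ++ [t.1, t.2] ++ q)) (a s' t' (p ++ [s] ++ q)))
    (elem : ∀ p s t q, IsElementary z p s q → SplitRel a Φ p s t q)
    (p : List Λ) (s : Λ) (t : Λ × Λ) (q : List Λ) : SplitRel a Φ p s t q := by
  induction hn : 2 * p.length + q.length using Nat.strong_induction_on
    generalizing p s t q with | _ n ih
  by_cases hq : 2 ≤ q.length
  · obtain ⟨q, c, d, rfl⟩ := exists_eq_append_pair hq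
    refine .append_pair ?_ (fun p => elem p z (c, d) [] (.inr ⟨rfl, rfl⟩))
      (ih _ ?_ p s t (q ++ [z]) rfl)
    · simpa using comm s t q z (c, d) [] (.inr ⟨rfl, rfl⟩)
    · simp only [List.length_append, List.length_cons, List.length_nil] at hn ⊢; omega
  by_cases hp : 2 ≤ p.length
  · obtain ⟨p, c, d, rfl⟩ := exists_eq_append_pair hp
    refine .prepend_pair (comm z (c, d) [] s t q (.inl ⟨by simp, by omega⟩))
      (ih _ ?_ p z (c, d) _ rfl) (ih _ ?_ p z (c, d) _ rfl) (ih _ ?_ (p ++ [z]) s t q rfl)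
    all_goals simp only [List.length_append, List.length_cons, List.length_nil] at hn ⊢; omega
  exact elem p s t q (.inl ⟨by omega, by omega⟩)

end Rewriting

section Tietze

variable {α β : Type*}

theorem isFinitelyPresented_of_retraction [Finite β] {rels rels₀ : Set (FreeGroup α)}
    (hfin : rels₀.Finite) (e : FreeGroup α →* FreeGroup β) (ι : FreeGroup β →* FreeGroup α)
    (he : ∀ b, e (ι (FreeGroup.of b)) = FreeGroup.of b)
    (hι : ∀ x, PresentedGroup.mk rels (ι (e (FreeGroup.of x))) = PresentedGroup.of x)
    (h₀ : ∀ r ∈ rels₀, PresentedGroup.mk rels r = 1)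
    (h : ∀ r ∈ rels, PresentedGroup.mk (e '' rels₀) (e r) = 1) :
    Group.IsFinitelyPresented (PresentedGroup rels) := by
  have e_ι (w) : e (ι w) = w :=
    DFunLike.congr_fun (FreeGroup.ext_hom (e.comp ι) (MonoidHom.id _) he) w
  have mk_ι_e (w) : PresentedGroup.mk rels (ι (e w)) = PresentedGroup.mk rels w :=
    DFunLike.congr_fun
      (FreeGroup.ext_hom (((PresentedGroup.mk rels).comp ι).comp e) (PresentedGroup.mk rels) hι) w
  refine .of_surjective ((PresentedGroup.mk rels).comp ι) ?_ ⟨e '' rels₀, hfin.image e, ?_⟩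
  · intro g
    obtain ⟨w, rfl⟩ := PresentedGroup.mk_surjective rels g
    exact ⟨e w, mk_ι_e w⟩
  apply le_antisymm
  · refine Subgroup.normalClosure_le_normal ?_
    rintro _ ⟨r, hr, rfl⟩
    exact (mk_ι_e r).trans (h₀ r hr)
  · intro w hw
    have hle : Subgroup.normalClosure rels ≤ ((PresentedGroup.mk (e '' rels₀)).comp e).ker :=
      Subgroup.normalClosure_le_normal h
    have := hle (PresentedGroup.mk_eq_one_iff.1 hw)
    rwa [MonoidHom.mem_ker, MonoidHom.comp_apply, e_ι, PresentedGroup.mk_eq_one_iff] at this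

end Tietze

instance : Fintype Letter := ⟨{.x, .v}, fun l => by cases l <;> simp⟩

instance : Fintype G1 := ⟨{.vv, .vx, .xv}, fun i => by cases i <;> simp⟩

instance : Fintype G3 := ⟨{.xvv, .xvx, .vxx, .vxv}, fun c => by cases c <;> simp⟩

/-- The families of generators indexed by words: `fam2 a s t` collects the `X_{a,s→t,u}`, and
`fam3 c` the `X_{c,u}`. -/
inductive Family : Type
  | fam2 : Letter → Letter → Tgt → Family
  | fam3 : G3 → Family
deriving Fintype

namespace Family

/-- The first index of the generators `X_{a,s→t,q}` on the left of the relations of a family: in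
(R1) and (R2) the index `a` of the family itself, in (R3)-(R6) the first letter before
rewriting. -/
def src : Family → Letter
  | .fam2 a _ _ => a
  | .fam3 .xvv | .fam3 .xvx => .x
  | .fam3 .vxx | .fam3 .vxv => .v

/-- The first index of the generators `X_{a,s→t,q}` on the right of the relations of a family: in
(R1) and (R2) the index `a` of the family itself, in (R3)-(R6) the first letter after rewriting. -/
def tgt : Family → Letter
  | .fam2 a _ _ => a
  | .fam3 .xvv | .fam3 .xvx => .v
  | .fam3 .vxx | .fam3 .vxv => .x

/-- The generator of a family at a word, with value `1` at the empty word for the family (iii),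
which has no such generator. -/
def gen : Family → Word → FreeGroup Gen
  | .fam2 a s t, u => X (.fam2 a s t u)
  | .fam3 c, u => if hu : u = [] then 1 else X (.fam3 c ⟨u, hu⟩)

/-- The common shape of the relations (R1)-(R6), for elements `φ i u` of a group in place of the
generators. -/
def RelAt {G : Type*} [Group G] (φ : Family → Word → G) (i : Family) (p : Word) (s : Letter)
    (t : Tgt) (q : Word) : Prop :=
  φ (.fam2 i.src s t) q * φ i (p ++ tw t ++ q) = φ i (p ++ [s] ++ q) * φ (.fam2 i.tgt s t) q

/-- The element of the free group on `S` expressing the relation `RelAt`. -/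
def relator (i : Family) (p : Word) (s : Letter) (t : Tgt) (q : Word) : FreeGroup Gen :=
  (fam2 i.src s t).gen q * i.gen (p ++ tw t ++ q) *
    (i.gen (p ++ [s] ++ q) * (fam2 i.tgt s t).gen q)⁻¹

variable {G : Type*} [Group G]

theorem RelAt.map {G' : Type*} [Group G'] {φ : Family → Word → G} {i : Family} {p : Word}
    {s : Letter} {t : Tgt} {q : Word} (h : RelAt φ i p s t q) (f : G →* G') :
    RelAt (fun i u => f (φ i u)) i p s t q := by
  simpa only [RelAt, map_mul] using congrArg f h

theorem map_mul_mul_inv_eq_one_iff (f : FreeGroup Gen →* G) (g h g' h' : FreeGroup Gen) :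
    f (g * h * (g' * h')⁻¹) = 1 ↔ f g * f h = f g' * f h' := by
  rw [map_mul, map_inv, mul_inv_eq_one, map_mul, map_mul]

theorem map_relator_eq_one_iff (f : FreeGroup Gen →* G) (i : Family) (p : Word) (s : Letter)
    (t : Tgt) (q : Word) :
    f (relator i p s t q) = 1 ↔ RelAt (fun i u => f (i.gen u)) i p s t q :=
  map_mul_mul_inv_eq_one_iff f _ _ _ _

theorem gen_fam3 (c : G3) {u : Word} (hu : u ≠ []) : (fam3 c).gen u = X (.fam3 c ⟨u, hu⟩) :=
  dif_neg hu

theorem relator_fam3_mem_VFrels (c : G3) (p : Word) (s : Letter) (t : Tgt) (q : Word) :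
    relator (.fam3 c) p s t q ∈ VFrels := by
  rw [relator, gen_fam3 c (by simp [tw]), gen_fam3 c (by simp)]
  cases c
  exacts [.r3 s t p q, .r4 s t p q, .r5 s t p q, .r6 s t p q]

theorem relator_fam2_inv (a s' : Letter) (t' : Tgt) (p : Word) (s : Letter) (t : Tgt) (q : Word) :
    (relator (.fam2 a s' t') p s t q)⁻¹ =
      X (.fam2 a s' t' (p ++ [s] ++ q)) * X (.fam2 a s t q) *
        (X (.fam2 a s t q) * X (.fam2 a s' t' (p ++ tw t ++ q)))⁻¹ := by
  rw [relator, mul_inv_rev, inv_inv]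
  rfl

theorem relator_fam2_inv_mem_VFrels (a s' : Letter) (t' : Tgt) (p : Word) (s : Letter) (t : Tgt)
    (q : Word) : (relator (.fam2 a s' t') p s t q)⁻¹ ∈ VFrels := by
  rw [relator_fam2_inv]
  exact .r12 a s' s t' t p q

theorem exists_eq_relator_or_inv {r : FreeGroup Gen} (hr : r ∈ VFrels) :
    ∃ i p s t q, r = relator i p s t q ∨ r = (relator i p s t q)⁻¹ := by
  obtain ⟨a, s', s, t', t, p, q⟩ | ⟨s, t, p, q⟩ | ⟨s, t, p, q⟩ | ⟨s, t, p, q⟩ | ⟨s, t, p, q⟩ := hr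
  · exact ⟨.fam2 a s' t', p, s, t, q, .inr (relator_fam2_inv ..).symm⟩
  · exact ⟨.fam3 .xvv, p, s, t, q, .inl (by rw [relator, gen_fam3, gen_fam3]; rfl)⟩
  · exact ⟨.fam3 .xvx, p, s, t, q, .inl (by rw [relator, gen_fam3, gen_fam3]; rfl)⟩
  · exact ⟨.fam3 .vxx, p, s, t, q, .inl (by rw [relator, gen_fam3, gen_fam3]; rfl)⟩
  · exact ⟨.fam3 .vxv, p, s, t, q, .inl (by rw [relator, gen_fam3, gen_fam3]; rfl)⟩

theorem forall_mem_VFrels_map_eq_one_iff (f : FreeGroup Gen →* G) :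
    (∀ r ∈ VFrels, f r = 1) ↔ ∀ i p s t q, RelAt (fun i u => f (i.gen u)) i p s t q := by
  constructor
  · rintro h (⟨a, s', t'⟩ | c) p s t q <;> rw [← map_relator_eq_one_iff]
    · exact inv_eq_one.1 <| (map_inv f _).symm.trans <|
        h _ (relator_fam2_inv_mem_VFrels a s' t' p s t q)
    · exact h _ (relator_fam3_mem_VFrels c p s t q)
  · intro h r hr
    obtain ⟨i, p, s, t, q, rfl | rfl⟩ := exists_eq_relator_or_inv hr
    · exact (map_relator_eq_one_iff f i p s t q).2 (h i p s t q)
    · rw [map_inv, inv_eq_one, map_relator_eq_one_iff]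
      exact h i p s t q

/-- The action of `G × G` on `G` by left and right multiplication. It turns the relations of a
family, whose indices `src` and `tgt` may differ, into relations of the form `SplitRel`. -/
abbrev twoSidedAction : MulAction (G × G) G where
  smul g y := g.1 * y * g.2⁻¹
  one_smul y := by change 1 * y * 1⁻¹ = y; group
  mul_smul g h y := by
    change g.1 * h.1 * y * (g.2 * h.2)⁻¹ = g.1 * (h.1 * y * h.2⁻¹) * g.2⁻¹
    group

attribute [local instance] twoSidedAction

theorem splitRel_iff_relAt {φ : Family → Word → G} {i : Family} {p : Word} {s : Letter} {t : Tgt}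
    {q : Word} :
    SplitRel (fun s t q => (φ (fam2 i.src s t) q, φ (fam2 i.tgt s t) q)) (φ i) p s t q ↔
      RelAt φ i p s t q :=
  mul_inv_eq_iff_eq_mul

theorem relAt_of_isElementary {φ : Family → Word → G}
    (h : ∀ i p s t q, IsElementary .x p s q → RelAt φ i p s t q)
    (i : Family) (p : Word) (s : Letter) (t : Tgt) (q : Word) : RelAt φ i p s t q :=
  splitRel_iff_relAt.1 <| splitRel_of_isElementary (z := .x)
    (a := fun s t q => (φ (.fam2 i.src s t) q, φ (.fam2 i.tgt s t) q))
    (fun s' t' p s t q hs => Prod.ext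
      (h (.fam2 i.src s' t') p s t q hs) (h (.fam2 i.tgt s' t') p s t q hs))
    (fun p s t q hs => splitRel_iff_relAt.2 (h i p s t q hs)) p s t q

/-- `collapse` on reversed words, which makes the last letters available to pattern matching. -/
def collapseRev (φ : Family → Word → G) (i : Family) : Word → G
  | d :: c :: b :: a :: p =>
    (φ (.fam2 i.src .x (c, d)) [])⁻¹ * collapseRev φ i (.x :: b :: a :: p) *
      φ (.fam2 i.tgt .x (c, d)) []
  | u => φ i u.reverse
termination_by u => u.length

/-- The element at a word that is determined by the elements `φ i u` at words of length at most
three, when long words are contracted by the relations rewriting a final letter `x`. -/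
def collapse (φ : Family → Word → G) (i : Family) (u : Word) : G :=
  collapseRev φ i u.reverse

theorem collapse_of_length_le {φ : Family → Word → G} {i : Family} {u : Word}
    (hu : u.length ≤ 3) : collapse φ i u = φ i u := by
  rw [collapse, collapseRev.eq_2, List.reverse_reverse]
  intro d c b a p h
  have := congrArg List.length h
  simp only [List.length_reverse, List.length_cons] at this
  omega

theorem collapse_append_pair {φ : Family → Word → G} {i : Family} {p : Word} {c d : Letter}
    (hp : 2 ≤ p.length) :
    collapse φ i (p ++ [c, d]) =
      (φ (.fam2 i.src .x (c, d)) [])⁻¹ * collapse φ i (p ++ [.x]) *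
        φ (.fam2 i.tgt .x (c, d)) [] := by
  obtain ⟨p, a, b, rfl⟩ := exists_eq_append_pair hp
  simp [collapse, collapseRev]

theorem relAt_collapse {φ : Family → Word → G} (i : Family) {p : Word} (t : Tgt)
    (hp : 2 ≤ p.length) : RelAt (collapse φ) i p .x t [] := by
  have hshort : ([] : Word).length ≤ 3 := by simp
  rw [RelAt, List.append_nil, List.append_nil, tw, collapse_append_pair hp,
    collapse_of_length_le hshort, collapse_of_length_le hshort]
  group

theorem map_collapse_eq {G' : Type*} [Group G'] {φ : Family → Word → G} {θ : Family → Word → G'}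
    (f : G →* G') (hshort : ∀ i u, u.length ≤ 3 → f (φ i u) = θ i u)
    (hθ : ∀ i p t, RelAt θ i p .x t []) (i : Family) (u : Word) : f (collapse φ i u) = θ i u := by
  induction hn : u.length using Nat.strong_induction_on generalizing u with | _ n ih
  by_cases hu : u.length ≤ 3
  · rw [collapse_of_length_le hu, hshort i u hu]
  obtain ⟨p, c, d, rfl⟩ := exists_eq_append_pair (l := u) (by omega)
  simp only [List.length_append, List.length_cons, List.length_nil] at hu hn
  have hp : 2 ≤ p.length := by omega
  have hcontracted : f (collapse φ i (p ++ [.x])) = θ i (p ++ [.x]) :=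
    ih (p.length + 1) (by omega) _ (by simp)
  have hrel := hθ i p (c, d)
  simp only [RelAt, tw, List.append_nil] at hrel
  rw [collapse_append_pair hp, map_mul, map_mul, map_inv, hshort _ _ (by simp),
    hshort _ _ (by simp), hcontracted, mul_assoc, ← hrel, inv_mul_cancel_left]

end Family

/-- The word indexing a generator, taken to be empty for the family (i). -/
def Gen.word : Gen → Word
  | .fam1 _ => []
  | .fam2 _ _ _ u => u
  | .fam3 _ u => u.1

/-- The generators that remain after the elimination of those at long words. -/
abbrev ShortGen : Type := {g : Gen // g.word.length ≤ 3}

open Family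

theorem finite_setOf_length_word_le (n : ℕ) : {g : Gen | g.word.length ≤ n}.Finite := by
  have hwords : {u : Word | u.length ≤ n}.Finite := List.finite_length_le Letter n
  have h1 := Set.finite_range Gen.fam1
  have h2 := Set.finite_iUnion fun a => Set.finite_iUnion fun s => Set.finite_iUnion fun t =>
    hwords.image (Gen.fam2 a s t)
  have h3 := Set.finite_iUnion fun c =>
    (hwords.preimage Subtype.val_injective.injOn).image (Gen.fam3 c)
  refine ((h1.union h2).union h3).subset ?_
  rintro (i | ⟨a, s, t, u⟩ | ⟨c, u⟩) hu
  · exact .inl (.inl ⟨i, rfl⟩)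
  · exact .inl (.inr (by simpa [Gen.word] using hu))
  · exact .inr (by simpa [Gen.word] using hu)

instance : Finite ShortGen := finite_setOf_length_word_le 3

/-- The homomorphism that keeps the short generators and kills the others. -/
def truncate : FreeGroup Gen →* FreeGroup ShortGen :=
  FreeGroup.lift fun g => if hg : g.word.length ≤ 3 then FreeGroup.of ⟨g, hg⟩ else 1

/-- The homomorphism that replaces every generator by its expression in short generators. -/
def retraction : FreeGroup Gen →* FreeGroup ShortGen :=
  FreeGroup.lift fun
    | .fam1 i => truncate (X (.fam1 i))
    | .fam2 a s t u => collapse (fun i u => truncate (i.gen u)) (.fam2 a s t) u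
    | .fam3 c u => collapse (fun i u => truncate (i.gen u)) (.fam3 c) u.1

theorem truncate_of (g : Gen) (hg : g.word.length ≤ 3) :
    truncate (FreeGroup.of g) = FreeGroup.of ⟨g, hg⟩ := by
  rw [truncate, FreeGroup.lift_apply_of, dif_pos hg]

theorem retraction_gen (i : Family) (u : Word) :
    retraction (i.gen u) = collapse (fun i u => truncate (i.gen u)) i u := by
  cases i with
  | fam2 a s t => rw [gen, X, retraction, FreeGroup.lift_apply_of]
  | fam3 c =>
    by_cases hu : u = []
    · rw [hu, collapse_of_length_le (by simp), gen, dif_pos rfl, map_one, map_one]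
    · rw [gen_fam3 c hu, X, retraction, FreeGroup.lift_apply_of]

theorem retraction_of_short (g : Gen) (hg : g.word.length ≤ 3) :
    retraction (FreeGroup.of g) = FreeGroup.of ⟨g, hg⟩ := by
  rw [retraction, FreeGroup.lift_apply_of, ← truncate_of g hg]
  match g with
  | .fam1 i => rfl
  | .fam2 a s t u => exact collapse_of_length_le hg
  | .fam3 c u =>
    exact (collapse_of_length_le (u := u.1) hg).trans (congrArg truncate (gen_fam3 c u.2))

theorem map_val_truncate_gen (i : Family) {u : Word} (hu : u.length ≤ 3) :
    FreeGroup.map Subtype.val (truncate (i.gen u)) = i.gen u := by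
  cases i with
  | fam2 a s t => rw [gen, X, truncate_of (.fam2 a s t u) hu, FreeGroup.map.of]
  | fam3 c =>
    by_cases hne : u = []
    · rw [gen, dif_pos hne, map_one, map_one]
    · rw [gen_fam3 c hne, X, truncate_of (.fam3 c ⟨u, hne⟩) hu, FreeGroup.map.of]

theorem relAt_mk_gen (i : Family) (p : Word) (s : Letter) (t : Tgt) (q : Word) :
    RelAt (fun i u => PresentedGroup.mk VFrels (i.gen u)) i p s t q :=
  (forall_mem_VFrels_map_eq_one_iff (PresentedGroup.mk VFrels)).1
    (fun _ => PresentedGroup.one_of_mem) i p s t q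

theorem mk_map_val_retraction_gen (i : Family) (u : Word) :
    PresentedGroup.mk VFrels (FreeGroup.map Subtype.val (retraction (i.gen u))) =
      PresentedGroup.mk VFrels (i.gen u) := by
  rw [retraction_gen]
  exact map_collapse_eq (θ := fun i u => PresentedGroup.mk VFrels (i.gen u))
    ((PresentedGroup.mk VFrels).comp (FreeGroup.map Subtype.val))
    (fun i u hu => congrArg _ (map_val_truncate_gen i hu))
    (fun i p t => relAt_mk_gen i p .x t []) i u

theorem mk_map_val_retraction_of (g : Gen) :
    PresentedGroup.mk VFrels (FreeGroup.map Subtype.val (retraction (FreeGroup.of g))) =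
      PresentedGroup.of g := by
  match g with
  | .fam1 i => rw [retraction_of_short (.fam1 i) (Nat.zero_le 3), FreeGroup.map.of]; rfl
  | .fam2 a s t u => exact mk_map_val_retraction_gen (.fam2 a s t) u
  | .fam3 c u =>
    have := mk_map_val_retraction_gen (.fam3 c) u
    rwa [gen_fam3 c u.2] at this

/-- The relators with at most one letter on either side of the rewritten letter. -/
def elementaryRelators : Set (FreeGroup Gen) :=
  {r | ∃ i p s t q, p.length ≤ 1 ∧ q.length ≤ 1 ∧ relator i p s t q = r}

theorem finite_elementaryRelators : elementaryRelators.Finite := by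
  have hwords : {u : Word | u.length ≤ 1}.Finite := List.finite_length_le Letter 1
  refine (Set.finite_iUnion fun i => Set.finite_iUnion fun s => Set.finite_iUnion fun t =>
    hwords.image2 (fun p q => relator i p s t q) hwords).subset ?_
  rintro r ⟨i, p, s, t, q, hp, hq, rfl⟩
  simp only [Set.mem_iUnion]
  exact ⟨i, s, t, Set.mem_image2_of_mem hp hq⟩

theorem relAt_mk_retraction_of_isElementary (i : Family) {p : Word} {s : Letter} (t : Tgt)
    {q : Word} (h : IsElementary .x p s q) :
    RelAt (fun i u => PresentedGroup.mk (retraction '' elementaryRelators) (retraction (i.gen u)))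
      i p s t q := by
  by_cases hpq : p.length ≤ 1 ∧ q.length ≤ 1
  · exact (map_relator_eq_one_iff ((PresentedGroup.mk _).comp retraction) i p s t q).1 <|
      PresentedGroup.one_of_mem ⟨_, ⟨i, p, s, t, q, hpq.1, hpq.2, rfl⟩, rfl⟩
  · obtain ⟨rfl, rfl⟩ := h.resolve_left hpq
    have hp : 2 ≤ p.length := by simp only [List.length_nil] at hpq; omega
    simp only [retraction_gen]
    exact (relAt_collapse i t hp).map (PresentedGroup.mk _)

theorem mk_retraction_eq_one {r : FreeGroup Gen} (hr : r ∈ VFrels) :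
    PresentedGroup.mk (retraction '' elementaryRelators) (retraction r) = 1 :=
  (forall_mem_VFrels_map_eq_one_iff ((PresentedGroup.mk _).comp retraction)).2
    (relAt_of_isElementary fun i _ _ t _ => relAt_mk_retraction_of_isElementary i t) r hr

theorem mk_eq_one_of_mem_elementaryRelators {r : FreeGroup Gen} (hr : r ∈ elementaryRelators) :
    PresentedGroup.mk VFrels r = 1 := by
  obtain ⟨i, p, s, t, q, -, -, rfl⟩ := hr
  exact (map_relator_eq_one_iff (PresentedGroup.mk VFrels) i p s t q).2 (relAt_mk_gen i p s t q)

instance : Group.IsFinitelyPresented VF :=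
  isFinitelyPresented_of_retraction finite_elementaryRelators retraction
    (FreeGroup.map Subtype.val)
    (fun g => by rw [FreeGroup.map.of, retraction_of_short g.1 g.2])
    mk_map_val_retraction_of (fun _ => mk_eq_one_of_mem_elementaryRelators)
    (fun _ => mk_retraction_eq_one)

/-- VF is finitely presented: there are a finite generating set T and a finite set of
relators R' in the free group on T such that VF ≅ ⟨T | R'⟩. -/
theorem VF_finitely_presented :
    ∃ (T : Type) (_ : Finite T) (R' : Set (FreeGroup T)), R'.Finite ∧
      Nonempty (VF ≃* PresentedGroup R') := by
  obtain ⟨n, R', hfin, hiso⟩ :=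
    Group.IsFinitelyPresented.exists_mulEquiv_presentedGroup (G := VF)
  exact ⟨Fin n, inferInstance, R', hfin, hiso⟩
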